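/- Let G be a finite simple graph with m ≥ 1 edges and no isolated vertices. Then either (i) G is a complete graph of odd order, or (ii) f_2(G) ≥ m/2 + (1/4)·h(m) + 1/4, and there exists a 2-partition (V_1, V_2) of G such that max{e(V_1), e(V_2)} ≤ m/4 + (1/8)·h(m) and e(V_1, V_2) ≥ m/2 + (1/4)·h(m) + 1/4. -/

import Mathlib

open Finset

noncomputable def hfun (x : ℝ) : ℝ := Real.sqrt (2 * x + 1 / 4) - 1 / 2

variable {V : Type*} [Fintype V] [DecidableEq V]

/-- Number of edges of `G` with both endpoints in `S`. -/
def eIn (G : SimpleGraph V) [DecidableRel G.Adj] (S : Finset V) : ℕ :=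
  (Finset.univ.filter (fun p : V × V => G.Adj p.1 p.2 ∧ p.1 ∈ S ∧ p.2 ∈ S)).card / 2

/-- Number of edges of `G` with one endpoint in `S` and the other in `T` (for disjoint `S`, `T`). -/
def eCross (G : SimpleGraph V) [DecidableRel G.Adj] (S T : Finset V) : ℕ :=
  (Finset.univ.filter (fun p : V × V => G.Adj p.1 p.2 ∧ p.1 ∈ S ∧ p.2 ∈ T)).card

/-- `P` is a partition of the vertex set into `k` pairwise disjoint (possibly empty) parts. -/
def IsKPartition {k : ℕ} (P : Fin k → Finset V) : Prop :=
  (∀ i j : Fin k, i ≠ j → Disjoint (P i) (P j)) ∧ ∀ v : V, ∃ i, v ∈ P i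

/-- The number of crossing edges of a `k`-partition. -/
def crossTotal (G : SimpleGraph V) [DecidableRel G.Adj] {k : ℕ} (P : Fin k → Finset V) : ℕ :=
  ∑ i : Fin k, ∑ j : Fin k, if i < j then eCross G (P i) (P j) else 0

/-- `f_k(G)`: the maximum number of crossing edges over all `k`-partitions of `G`. -/
noncomputable def maxCut (G : SimpleGraph V) [DecidableRel G.Adj] (k : ℕ) : ℕ :=
  sSup {n : ℕ | ∃ P : Fin k → Finset V, IsKPartition P ∧ crossTotal G P = n}

section Aux
set_option linter.unusedSectionVars false

noncomputable def aij (G : SimpleGraph V) [DecidableRel G.Adj] (v w : V) : ℝ :=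
  if G.Adj v w then 1 else 0

noncomputable def dgr (G : SimpleGraph V) [DecidableRel G.Adj] (v : V) (T : Finset V) : ℝ :=
  ∑ w ∈ T, aij G v w

noncomputable def EE (G : SimpleGraph V) [DecidableRel G.Adj] (S T : Finset V) : ℝ :=
  ∑ v ∈ S, dgr G v T

variable (G : SimpleGraph V) [DecidableRel G.Adj]

lemma aij_symm (v w : V) : aij G v w = aij G w v := by
  unfold aij; simp [G.adj_comm]

lemma aij_self (v : V) : aij G v v = 0 := by
  unfold aij; simp

lemma aij_nonneg (v w : V) : 0 ≤ aij G v w := by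
  unfold aij; split_ifs <;> simp

lemma dgr_card (v : V) (T : Finset V) : dgr G v T = ((T.filter (G.Adj v)).card : ℝ) := by
  unfold dgr aij; simp

lemma dgr_nonneg (v : V) (T : Finset V) : 0 ≤ dgr G v T :=
  Finset.sum_nonneg fun _ _ => aij_nonneg G _ _

lemma dgr_mono (v : V) {S T : Finset V} (h : S ⊆ T) : dgr G v S ≤ dgr G v T :=
  Finset.sum_le_sum_of_subset_of_nonneg h fun _ _ _ => aij_nonneg G _ _

lemma dgr_insert (v u : V) (T : Finset V) (h : u ∉ T) :
    dgr G v (insert u T) = aij G v u + dgr G v T := by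
  unfold dgr; rw [Finset.sum_insert h]

lemma EE_symm (S T : Finset V) : EE G S T = EE G T S := by
  unfold EE dgr
  rw [Finset.sum_comm]
  exact Finset.sum_congr rfl fun _ _ => Finset.sum_congr rfl fun _ _ => aij_symm G _ _

lemma EE_insert_left (v : V) (S T : Finset V) (h : v ∉ S) :
    EE G (insert v S) T = dgr G v T + EE G S T := by
  unfold EE; rw [Finset.sum_insert h]

lemma EE_insert_right (v : V) (S T : Finset V) (h : v ∉ T) :
    EE G S (insert v T) = dgr G v S + EE G S T := by
  rw [EE_symm, EE_insert_left G v T S h, EE_symm G T S]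

lemma EE_card (S T : Finset V) : EE G S T =
    ((Finset.univ.filter (fun p : V × V => G.Adj p.1 p.2 ∧ p.1 ∈ S ∧ p.2 ∈ T)).card : ℝ) := by
  have : (Finset.univ.filter (fun p : V × V => G.Adj p.1 p.2 ∧ p.1 ∈ S ∧ p.2 ∈ T))
      = (S ×ˢ T).filter (fun p => G.Adj p.1 p.2) := by
    ext p; simp; tauto
  rw [this]
  unfold EE dgr aij
  rw [← Finset.sum_product']
  simp

lemma EE_cross (S T : Finset V) : EE G S T = (eCross G S T : ℝ) := by
  rw [EE_card]; rfl

lemma EE_in (S : Finset V) : (eIn G S : ℝ) ≤ EE G S S / 2 := by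
  rw [EE_card]; unfold eIn
  exact_mod_cast Nat.cast_div_le

lemma EE_univ : EE G Finset.univ Finset.univ = 2 * (G.edgeFinset.card : ℝ) := by
  have := G.sum_degrees_eq_twice_card_edges
  unfold EE
  simp only [dgr_card]
  rw [← Nat.cast_sum]
  have h2 : ∀ v, (Finset.univ.filter (G.Adj v)).card = G.degree v := by
    intro v
    rw [← G.card_neighborFinset_eq_degree]
    congr 1; ext; simp
  simp only [h2]
  rw [this]; push_cast; ring

lemma dgr_add_compl (v : V) (S : Finset V) :
    dgr G v S + dgr G v Sᶜ = dgr G v Finset.univ := by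
  unfold dgr; exact Finset.sum_add_sum_compl S _

lemma EE_total (S : Finset V) :
    EE G S S + EE G Sᶜ Sᶜ + 2 * EE G S Sᶜ = 2 * (G.edgeFinset.card : ℝ) := by
  rw [← EE_univ]
  have h1 : EE G Finset.univ Finset.univ = EE G S Finset.univ + EE G Sᶜ Finset.univ := by
    unfold EE; exact (Finset.sum_add_sum_compl S _).symm
  have h2 : ∀ T, EE G T Finset.univ = EE G T S + EE G T Sᶜ := by
    intro T; unfold EE; rw [← Finset.sum_add_distrib]
    exact Finset.sum_congr rfl fun v _ => (dgr_add_compl G v S).symm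
  rw [h1, h2, h2, EE_symm G Sᶜ S]; ring

lemma erase_facts (W : Finset V) (v : V) (hv : v ∈ W) :
    EE G (W.erase v) (W.erase v) = EE G W W - 2 * dgr G v W ∧
    EE G (W.erase v) (W.erase v)ᶜ = EE G W Wᶜ + dgr G v W - dgr G v Wᶜ ∧
    EE G (W.erase v)ᶜ (W.erase v)ᶜ = EE G Wᶜ Wᶜ + 2 * dgr G v Wᶜ := by
  have hU : v ∉ W.erase v := Finset.notMem_erase v W
  have hc : (W.erase v)ᶜ = insert v Wᶜ := by
    ext x; simp
  have hvc : v ∉ Wᶜ := by simpa using hv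
  have hd : dgr G v W = dgr G v (W.erase v) := by
    conv_lhs => rw [← Finset.insert_erase hv]
    rw [dgr_insert G v v _ hU, aij_self, zero_add]
  have hd2 : dgr G v (insert v Wᶜ) = dgr G v Wᶜ := by
    rw [dgr_insert G v v _ hvc, aij_self, zero_add]
  have h1 : EE G W W = EE G (W.erase v) (W.erase v) + 2 * dgr G v W := by
    conv_lhs => rw [← Finset.insert_erase hv]
    rw [EE_insert_left G v _ _ hU, EE_insert_right G v _ _ hU, Finset.insert_erase hv, hd]; ring
  have h2 : EE G W Wᶜ = dgr G v Wᶜ + EE G (W.erase v) Wᶜ := by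
    rw [← EE_insert_left G v _ _ hU, Finset.insert_erase hv]
  refine ⟨by linarith, ?_, ?_⟩
  · rw [hc, EE_insert_right G v _ _ hvc, h2, hd]; ring
  · rw [hc, EE_insert_right G v _ _ hvc, EE_insert_left G v _ _ hvc, hd2]; ring

/-- degree counting -/
lemma deg_count (W L : Finset V) (a : ℕ) (hL : L.card ≤ 1)
    (h : ∀ v ∈ W, 0 < dgr G v W → v ∉ L → (a : ℝ) ≤ dgr G v W)
    (w : V) (hw : w ∈ W) (hw0 : 0 < dgr G w W) (hwL : w ∉ L) :
    (a : ℝ) * (a + 1) ≤ EE G W W := by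
  classical
  set Wp := W.filter (fun v => 0 < dgr G v W) with hWp
  set Q := Wp \ L with hQ
  have hnb : ∀ v ∈ W, ∀ u ∈ W, G.Adj v u → u ∈ Wp := by
    intro v hv u hu huv
    rw [hWp, Finset.mem_filter]
    refine ⟨hu, ?_⟩
    rw [dgr_card]
    have : 0 < (W.filter (G.Adj u)).card :=
      Finset.card_pos.2 ⟨v, by simp [hv, huv.symm]⟩
    exact_mod_cast this
  have hQW : Q ⊆ W := fun v hv => by
    rw [hQ, hWp] at hv; simp at hv; exact hv.1.1
  have hQdeg : ∀ v ∈ Q, a ≤ (W.filter (G.Adj v)).card := by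
    intro v hv
    have hv' := hv
    rw [hQ, hWp] at hv'; simp only [Finset.mem_sdiff, Finset.mem_filter] at hv'
    have := h v hv'.1.1 hv'.1.2 hv'.2
    rw [dgr_card] at this; exact_mod_cast this
  have hwQ : w ∈ Q := by
    rw [hQ, hWp]; simp only [Finset.mem_sdiff, Finset.mem_filter]; exact ⟨⟨hw, hw0⟩, hwL⟩
  have hsumQ : (a : ℝ) * Q.card ≤ ∑ v ∈ Q, dgr G v W := by
    have := Finset.card_nsmul_le_sum Q (fun v => dgr G v W) a (fun v hv => by
      simp only [dgr_card]; exact_mod_cast hQdeg v hv)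
    rw [nsmul_eq_mul] at this; linarith
  have hsub : ∑ v ∈ Q, dgr G v W ≤ EE G W W :=
    Finset.sum_le_sum_of_subset_of_nonneg hQW fun _ _ _ => dgr_nonneg G _ _
  by_cases hq : a + 1 ≤ Q.card
  · have : ((a + 1 : ℕ) : ℝ) ≤ Q.card := by exact_mod_cast hq
    push_cast at this
    have ha : (0 : ℝ) ≤ a := by positivity
    nlinarith
  · push Not at hq
    -- every vertex in Q has a neighbour in L
    have hnbL : ∀ v ∈ Q, a ≤ (Q.card - 1) + (L.filter (fun u => u ∈ W ∧ G.Adj v u)).card := by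
      intro v hv
      refine (hQdeg v hv).trans ?_
      rw [← Finset.card_erase_of_mem hv]
      refine le_trans (Finset.card_le_card ?_) (Finset.card_union_le _ _)
      intro u hu
      simp only [Finset.mem_filter] at hu
      have hup := hnb v (hQW hv) u hu.1 hu.2
      by_cases huL : u ∈ L
      · simp [huL, hu]
      · have : u ∈ Q := by rw [hQ]; simp [hup, huL]
        simp [this, hu.2.ne']
    have hQpos : 0 < Q.card := Finset.card_pos.2 ⟨w, hwQ⟩
    have hLw := hnbL w hwQ
    have hle1 : (L.filter (fun u => u ∈ W ∧ G.Adj w u)).card ≤ 1 :=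
      (Finset.card_filter_le _ _).trans hL
    by_cases hex : (L.filter (fun u => u ∈ W ∧ G.Adj w u)).card = 0
    · omega
    obtain ⟨u, hu⟩ := Finset.card_pos.1 (Nat.pos_of_ne_zero hex)
    simp only [Finset.mem_filter] at hu
    have hLu : ∀ x ∈ L, x = u := fun x hx => Finset.card_le_one.1 hL x hx u hu.1
    have huQ : u ∉ Q := by rw [hQ]; simp [hu.1]
    have hadj : ∀ v ∈ Q, G.Adj u v := by
      intro v hv
      have h1 := hnbL v hv
      have : 0 < (L.filter (fun u => u ∈ W ∧ G.Adj v u)).card := by omega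
      obtain ⟨x, hx⟩ := Finset.card_pos.1 this
      simp only [Finset.mem_filter] at hx
      rw [← hLu x hx.1]; exact hx.2.2.symm
    have hud : (Q.card : ℝ) ≤ dgr G u W := by
      rw [dgr_card]
      exact_mod_cast Finset.card_le_card fun v hv => by simp [hQW hv, hadj v hv]
    have hsub2 : ∑ v ∈ insert u Q, dgr G v W ≤ EE G W W :=
      Finset.sum_le_sum_of_subset_of_nonneg
        (Finset.insert_subset hu.2.1 hQW) fun _ _ _ => dgr_nonneg G _ _
    rw [Finset.sum_insert huQ] at hsub2
    have hqa : Q.card = a := by omega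
    rw [hqa] at hud hsumQ
    nlinarith

lemma judicious (m : ℕ) (hm : m = G.edgeFinset.card) (H : ℝ) (hH1 : 1 ≤ H)
    (hH : H * (H + 1) = 2 * m)
    (S : Finset V) (hS : (m : ℝ) / 2 + H / 4 + 1 / 4 ≤ EE G S Sᶜ) :
    ∃ W : Finset V, EE G W W / 2 ≤ m / 4 + H / 8 ∧ EE G Wᶜ Wᶜ / 2 ≤ m / 4 + H / 8 ∧
      (m : ℝ) / 2 + H / 4 + 1 / 4 ≤ EE G W Wᶜ := by
  classical
  -- maximum cut
  obtain ⟨M, -, hM⟩ := Finset.exists_max_image (Finset.univ : Finset (Finset V))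
    (fun S => EE G S Sᶜ) ⟨∅, Finset.mem_univ _⟩
  have hM' : ∀ T, EE G T Tᶜ ≤ EE G M Mᶜ := fun T => hM T (Finset.mem_univ _)
  obtain ⟨V1, hV1, hxy⟩ : ∃ V1 : Finset V, (∀ T, EE G T Tᶜ ≤ EE G V1 V1ᶜ) ∧
      EE G V1ᶜ V1ᶜ ≤ EE G V1 V1 := by
    rcases le_total (EE G Mᶜ Mᶜ) (EE G M M) with h | h
    · exact ⟨M, hM', h⟩
    · refine ⟨Mᶜ, ?_, by simpa using h⟩
      intro T; rw [EE_symm G Mᶜ]; simpa using hM' T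
  have htot := fun S => EE_total G S
  rw [← hm] at htot
  have hdle : ∀ v ∈ V1, dgr G v V1 ≤ dgr G v V1ᶜ := by
    intro v hv
    have := (erase_facts G V1 v hv).2.1
    have := hV1 (V1.erase v)
    linarith
  -- minimal W
  set F := (Finset.univ : Finset (Finset V)).filter (fun W => W ⊆ V1 ∧
    (m : ℝ) / 2 + H / 4 + 1 / 4 ≤ EE G W Wᶜ ∧ EE G Wᶜ Wᶜ / 2 ≤ m / 4 + H / 8) with hF
  have hV1F : V1 ∈ F := by
    rw [hF]; simp only [Finset.mem_filter, Finset.mem_univ, true_and]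
    have h1 := hV1 S
    have h2 := htot V1
    exact ⟨subset_rfl, by linarith, by linarith⟩
  obtain ⟨W, hWF, hWmin⟩ := Finset.exists_min_image F (fun W => W.card) ⟨V1, hV1F⟩
  rw [hF] at hWF; simp only [Finset.mem_filter, Finset.mem_univ, true_and] at hWF
  obtain ⟨hWV, hWc, hWy⟩ := hWF
  refine ⟨W, ?_, hWy, hWc⟩
  by_contra hcon
  push Not at hcon
  obtain ⟨s, hs⟩ : ∃ s, s = EE G W Wᶜ - (m / 2 + H / 4 + 1 / 4) := ⟨_, rfl⟩
  obtain ⟨t, ht⟩ : ∃ t, t = EE G W W / 2 - (m / 4 + H / 8) := ⟨_, rfl⟩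
  have hs0 : 0 ≤ s := by linarith
  have ht0 : 0 < t := by linarith
  have hdW : ∀ v ∈ W, dgr G v W ≤ dgr G v Wᶜ := by
    intro v hv
    have h1 := dgr_mono G v hWV
    have h2 := dgr_mono G v (Finset.compl_subset_compl.2 hWV)
    have := hdle v (hWV hv)
    linarith
  have hstuck : ∀ v ∈ W, dgr G v W + s < dgr G v Wᶜ ∨ s + t + H / 2 + 1 / 4 < dgr G v Wᶜ := by
    intro v hv
    by_contra hc
    push Not at hc
    obtain ⟨e1, e2, e3⟩ := erase_facts G W v hv
    have : W.erase v ∈ F := by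
      rw [hF]; simp only [Finset.mem_filter, Finset.mem_univ, true_and]
      have := htot W
      exact ⟨(Finset.erase_subset _ _).trans hWV, by linarith, by linarith⟩
    have := hWmin _ this
    have := Finset.card_erase_lt_of_mem hv
    omega
  set L := W.filter (fun v => dgr G v W + s < dgr G v Wᶜ) with hL
  have hsum : EE G W Wᶜ - EE G W W = ∑ v ∈ W, (dgr G v Wᶜ - dgr G v W) := by
    unfold EE; rw [Finset.sum_sub_distrib]
  have hLcard : L.card ≤ 1 := by
    by_contra hLc
    push Not at hLc
    obtain ⟨u, hu, w, hw, huw⟩ := Finset.one_lt_card.1 hLc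
    have hsub : ({u, w} : Finset V) ⊆ W := by
      intro x hx
      simp only [Finset.mem_insert, Finset.mem_singleton] at hx
      rcases hx with rfl | rfl
      · exact (Finset.mem_filter.1 hu).1
      · exact (Finset.mem_filter.1 hw).1
    have h1 : ∑ v ∈ ({u, w} : Finset V), (dgr G v Wᶜ - dgr G v W) ≤
        ∑ v ∈ W, (dgr G v Wᶜ - dgr G v W) :=
      Finset.sum_le_sum_of_subset_of_nonneg hsub fun v hv _ => by linarith [hdW v hv]
    rw [Finset.sum_pair huw] at h1
    have hu2 := (Finset.mem_filter.1 hu).2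
    have hw2 := (Finset.mem_filter.1 hw).2
    have hu3 : dgr G u W + 1 ≤ dgr G u Wᶜ := by
      have : dgr G u W < dgr G u Wᶜ := by linarith
      rw [dgr_card, dgr_card] at this ⊢
      exact_mod_cast this
    linarith
  have hnl : ∀ v ∈ W, v ∉ L → t + H / 2 + 1 / 4 < dgr G v W := by
    intro v hv hvL
    have h1 : ¬ (dgr G v W + s < dgr G v Wᶜ) := fun h => hvL (Finset.mem_filter.2 ⟨hv, h⟩)
    have h2 := (hstuck v hv).resolve_left h1
    linarith
  -- find a vertex outside L
  have hWW : 0 < EE G W W := by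
    have : (0 : ℝ) ≤ m := by positivity
    linarith
  obtain ⟨v0, hv0, hv0d⟩ : ∃ v ∈ W, 0 < dgr G v W := by
    by_contra hc; push Not at hc
    have : EE G W W ≤ 0 := Finset.sum_nonpos hc
    linarith
  obtain ⟨w, hw, hw0, hwL⟩ : ∃ w ∈ W, 0 < dgr G w W ∧ w ∉ L := by
    by_cases hv : v0 ∈ L
    · have : 0 < (W.filter (G.Adj v0)).card := by
        rw [dgr_card] at hv0d; exact_mod_cast hv0d
      obtain ⟨u, hu⟩ := Finset.card_pos.1 this
      simp only [Finset.mem_filter] at hu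
      have huL : u ∉ L := fun huL =>
        hu.2.ne (Finset.card_le_one.1 hLcard v0 hv u huL)
      refine ⟨u, hu.1, ?_, huL⟩
      have := hnl u hu.1 huL
      linarith
    · exact ⟨v0, hv0, hv0d, hv⟩
  obtain ⟨a, ha⟩ : ∃ a : ℕ, a = ⌈t + H / 2 + 1 / 4⌉₊ := ⟨_, rfl⟩
  have ha1 : t + H / 2 + 1 / 4 ≤ a := by rw [ha]; exact Nat.le_ceil _
  have key := deg_count G W L a hLcard (fun v hv _ hvL => by
    have := hnl v hv hvL
    rw [dgr_card] at this ⊢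
    rw [ha]
    exact_mod_cast Nat.ceil_le.2 this.le) w hw hw0 hwL
  have : (t + H / 2 + 1 / 4) * (t + H / 2 + 1 / 4 + 1) ≤ (a : ℝ) * (a + 1) := by
    apply mul_le_mul ha1 (by linarith) (by linarith) (by linarith)
  nlinarith [mul_nonneg ht0.le (by linarith : (0:ℝ) ≤ H - 1)]

lemma count_sep (n : ℕ) (i j : Fin (2 * (n + 1))) (hij : i ≠ j) :
    (((Finset.univ : Finset (Fin (2 * (n + 1)))).powersetCard (n + 1)).filter
      (fun S => i ∈ S ∧ j ∉ S)).card = n.centralBinom := by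
  have : (((Finset.univ : Finset (Fin (2 * (n + 1)))).powersetCard (n + 1)).filter
      (fun S => i ∈ S ∧ j ∉ S)) =
      (((Finset.univ : Finset (Fin (2 * (n + 1)))) \ {i, j}).powersetCard n).image (insert i) := by
    ext S
    simp only [Finset.mem_filter, Finset.mem_powersetCard, Finset.mem_image]
    constructor
    · rintro ⟨⟨-, hc⟩, hi, hj⟩
      refine ⟨S.erase i, ⟨?_, ?_⟩, Finset.insert_erase hi⟩
      · intro x hx
        simp only [Finset.mem_erase] at hx
        simp only [Finset.mem_sdiff, Finset.mem_univ, true_and, Finset.mem_insert,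
          Finset.mem_singleton]
        rintro (rfl | rfl)
        · exact hx.1 rfl
        · exact hj hx.2
      · rw [Finset.card_erase_of_mem hi, hc]; rfl
    · rintro ⟨T, ⟨hT, hc⟩, rfl⟩
      have hiT : i ∉ T := fun h => by have := hT h; simp at this
      have hjT : j ∉ T := fun h => by have := hT h; simp at this
      refine ⟨⟨Finset.subset_univ _, ?_⟩, Finset.mem_insert_self _ _, ?_⟩
      · rw [Finset.card_insert_of_notMem hiT, hc]
      · simp [hjT, hij.symm]
  rw [this, Finset.card_image_of_injOn, Finset.card_powersetCard, Finset.card_sdiff_of_subset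
    (Finset.subset_univ _), Finset.card_pair hij, Nat.centralBinom]
  · congr 1; simp; omega
  · intro S hS T hT h
    simp only [Finset.mem_coe,
      Finset.mem_powersetCard] at hS hT
    have h1 : i ∉ S := fun h => by have := hS.1 h; simp at this
    have h2 : i ∉ T := fun h => by have := hT.1 h; simp at this
    rw [← Finset.erase_insert h1, ← Finset.erase_insert h2]
    rw [h]

lemma color_cut (n : ℕ) (C : G.Coloring (Fin (2 * (n + 1)))) :
    ∃ S : Finset V, G.edgeFinset.card * (n + 1) ≤ eCross G S Sᶜ * (2 * n + 1) := by
  classical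
  set P := (Finset.univ : Finset (Fin (2 * (n + 1)))).powersetCard (n + 1) with hP
  set f : Finset (Fin (2 * (n + 1))) → Finset V := fun T => Finset.univ.filter (fun v => C v ∈ T)
    with hf
  have hPc : P.card = (n + 1).centralBinom := by
    rw [hP, Finset.card_powersetCard, Nat.centralBinom]; simp
  have hsum : ∑ T ∈ P, EE G (f T) (f T)ᶜ =
      2 * (G.edgeFinset.card : ℝ) * n.centralBinom := by
    have h1 : ∀ T ∈ P, EE G (f T) (f T)ᶜ =
        ∑ v, ∑ w, if C v ∈ T ∧ C w ∉ T then aij G v w else 0 := by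
      intro T _
      unfold EE dgr
      have hfc : (f T)ᶜ = Finset.univ.filter (fun v => C v ∉ T) := by
        ext x; simp [hf]
      rw [hfc, hf, Finset.sum_filter]
      refine Finset.sum_congr rfl fun v _ => ?_
      rw [Finset.sum_filter]
      by_cases hv : C v ∈ T <;> simp [hv]
    rw [Finset.sum_congr rfl h1, Finset.sum_comm, ← EE_univ]
    unfold EE dgr
    rw [Finset.sum_mul]
    refine Finset.sum_congr rfl fun v _ => ?_
    rw [Finset.sum_comm, Finset.sum_mul]
    refine Finset.sum_congr rfl fun w _ => ?_
    by_cases hvw : G.Adj v w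
    · rw [← Finset.sum_filter, Finset.sum_const, count_sep n _ _ (C.valid hvw), nsmul_eq_mul,
        mul_comm]
    · simp [aij, hvw]
  by_contra hcon
  push Not at hcon
  have hlt : ∑ T ∈ P, EE G (f T) (f T)ᶜ * (2 * n + 1) <
      ∑ T ∈ P, (G.edgeFinset.card : ℝ) * (n + 1) := by
    apply Finset.sum_lt_sum_of_nonempty
    · rw [← Finset.card_pos, hPc]; exact Nat.centralBinom_pos _
    · intro T _
      rw [EE_cross]; exact_mod_cast hcon (f T)
  rw [← Finset.sum_mul, hsum, Finset.sum_const, hPc, nsmul_eq_mul] at hlt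
  have := Nat.succ_mul_centralBinom_succ n
  have h2 : ((n : ℝ) + 1) * ((n + 1).centralBinom : ℝ) = 2 * (2 * n + 1) * n.centralBinom := by
    exact_mod_cast this
  have h3 : ((n + 1).centralBinom : ℝ) * ((G.edgeFinset.card : ℝ) * (n + 1)) =
    G.edgeFinset.card * (((n : ℝ) + 1) * ((n + 1).centralBinom : ℝ)) := by ring
  rw [h3, h2] at hlt
  nlinarith

lemma recolor (k : ℕ) (hk : ¬ G.Colorable (k - 1)) (f : V → Fin k) (j : Fin k)
    (hf : ∀ v w, G.Adj v w → f v ≠ f w) (hj : ∀ v, f v ≠ j) : False := by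
  apply hk
  let C : G.Coloring {x : Fin k // x ≠ j} := SimpleGraph.Coloring.mk (fun v => ⟨f v, hj v⟩)
    (fun {v w} h => by
      intro he
      exact hf v w h (by simpa using he))
  have := C.colorable
  have hc : Fintype.card {x : Fin k // x ≠ j} = k - 1 := by
    rw [Fintype.card_subtype_compl]; simp
  rwa [hc] at this

lemma pair_edge (k : ℕ) (hk : ¬ G.Colorable (k - 1)) (C : G.Coloring (Fin k)) (i j : Fin k)
    (hij : i ≠ j) : ∃ v w, G.Adj v w ∧ C v = i ∧ C w = j := by
  by_contra hcon
  push Not at hcon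
  refine recolor G k hk (fun v => if C v = j then i else C v) j ?_ ?_
  · intro v w h
    have h0 := C.valid h
    have h1 := hcon v w h
    have h2 := hcon w v h.symm
    split_ifs with a b b
    · exact fun _ => h0 (a.trans b.symm)
    · exact fun e => h2 e.symm a
    · exact fun e => h1 e b
    · exact h0
  · intro v
    split_ifs with a
    · exact hij
    · exact a

lemma chrom_struct (k : ℕ) (hk2 : 2 ≤ k) (hk : ¬ G.Colorable (k - 1)) (C : G.Coloring (Fin k))
    (hiso : ∀ v : V, ∃ w : V, G.Adj v w) :
    k * (k - 1) ≤ 2 * G.edgeFinset.card ∧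
    (2 * G.edgeFinset.card ≤ k * (k - 1) → G = ⊤ ∧ Fintype.card V = k) := by
  classical
  set A := (Finset.univ.filter (fun p : V × V => G.Adj p.1 p.2)) with hA
  have hAc : A.card = 2 * G.edgeFinset.card := by
    have h1 := EE_univ G
    rw [EE_card] at h1
    simp only [Finset.mem_univ, and_true] at h1
    exact_mod_cast h1
  set B := (Finset.univ : Finset (Fin k)).offDiag with hB
  have hBc : B.card = k * (k - 1) := by
    rw [hB, Finset.offDiag_card]; simp [Nat.mul_sub]
  set φ : V × V → Fin k × Fin k := fun p => (C p.1, C p.2) with hφ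
  have hmaps : Set.MapsTo φ A B := by
    intro p hp
    simp only [hA, Finset.coe_filter, Finset.mem_univ, true_and, Set.mem_setOf_eq] at hp
    simp only [hB, Finset.mem_coe, Finset.mem_offDiag, Finset.mem_univ, true_and]
    exact C.valid hp
  have hsurj : Set.SurjOn φ A B := by
    rintro ⟨i, j⟩ hij
    simp only [hB, Finset.mem_coe, Finset.mem_offDiag, Finset.mem_univ, true_and] at hij
    obtain ⟨v, w, h, rfl, rfl⟩ := pair_edge G k hk C i j hij
    exact ⟨(v, w), by simp [hA, h], rfl⟩
  refine ⟨?_, ?_⟩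
  · rw [← hAc, ← hBc]; exact Finset.card_le_card_of_surjOn φ hsurj
  intro hle
  rw [← hAc, ← hBc] at hle
  have hinj : Set.InjOn φ A := Finset.injOn_of_surjOn_of_card_le φ hmaps hsurj hle
  have hinj' : ∀ v w v' w', G.Adj v w → G.Adj v' w' → C v = C v' → C w = C w' → v = v' := by
    intro v w v' w' h h' e1 e2
    have : (v, w) = (v', w') := hinj (by simp [hA, h]) (by simp [hA, h']) (by simp [hφ, e1, e2])
    exact (Prod.ext_iff.1 this).1
  have hCinj : Function.Injective C := by
    intro u u' he
    by_contra hne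
    have hg : ∀ v, ∃ c : Fin k, C v = C u → c ≠ C u ∧ ∀ w, G.Adj v w → C w ≠ c := by
      intro v
      by_cases hv : C v = C u
      · obtain ⟨v', hv', hvv'⟩ : ∃ v', C v' = C u ∧ v ≠ v' := by
          by_cases h : v = u
          · exact ⟨u', he.symm, h ▸ hne⟩
          · exact ⟨u, rfl, h⟩
        obtain ⟨w', hw'⟩ := hiso v'
        refine ⟨C w', fun _ => ⟨fun e => C.valid hw' (hv'.trans e.symm), fun w hw e => ?_⟩⟩
        exact hvv' (hinj' v w v' w' hw hw' (hv.trans hv'.symm) e)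
      · exact ⟨C u, fun h => absurd h hv⟩
    choose g hg using hg
    refine recolor G k hk (fun v => if C v = C u then g v else C v) (C u) ?_ ?_
    · intro v w h
      have h0 := C.valid h
      split_ifs with a b b
      · exact fun _ => h0 (a.trans b.symm)
      · exact fun e => (hg v a).2 w h e.symm
      · exact fun e => (hg w b).2 v h.symm e
      · exact h0
    · intro v
      split_ifs with a
      · exact (hg v a).1
      · exact a
  have hCsurj : Function.Surjective C := by
    intro i
    have : Nontrivial (Fin k) := Fin.nontrivial_iff_two_le.2 hk2
    obtain ⟨j, hj⟩ := exists_ne i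
    obtain ⟨v, w, -, hv, -⟩ := pair_edge G k hk C i j hj.symm
    exact ⟨v, hv⟩
  constructor
  · ext v w
    simp only [SimpleGraph.top_adj]
    refine ⟨fun h => h.ne, fun h => ?_⟩
    obtain ⟨v', w', h', e1, e2⟩ := pair_edge G k hk C (C v) (C w) (fun e => h (hCinj e))
    rw [← hCinj e1, ← hCinj e2]; exact h'
  · simpa using Fintype.card_of_bijective ⟨hCinj, hCsurj⟩

lemma cut_bound (m : ℕ) (hm : m = G.edgeFinset.card) (hm1 : 1 ≤ m)
    (hiso : ∀ v : V, ∃ w : V, G.Adj v w) (H : ℝ) (hH1 : 1 ≤ H)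
    (hH : H * (H + 1) = 2 * m) :
    (G = ⊤ ∧ Odd (Fintype.card V)) ∨
    ∃ S : Finset V, (m : ℝ) / 2 + H / 4 + 1 / 4 ≤ EE G S Sᶜ := by
  classical
  have hex : ∃ k, G.Colorable k := ⟨_, G.colorable_of_fintype⟩
  obtain ⟨k, hkc, hkm⟩ : ∃ k, G.Colorable k ∧ ∀ j < k, ¬ G.Colorable j :=
    ⟨Nat.find hex, Nat.find_spec hex, fun j hj => Nat.find_min hex hj⟩
  obtain ⟨C⟩ := id hkc
  have hk2 : 2 ≤ k := by
    have : 0 < G.edgeFinset.card := by omega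
    obtain ⟨e, he⟩ := Finset.card_pos.1 this
    induction e with
    | _ v w =>
      have hadj : G.Adj v w := by simpa using he
      have h0 := C.valid hadj
      by_contra hlt
      apply h0
      apply Fin.ext
      have := (C v).2; have := (C w).2
      omega
  have hk := hkm (k - 1) (by omega)
  obtain ⟨h1, h2⟩ := chrom_struct G k hk2 hk C hiso
  rw [← hm] at h1 h2
  -- general finishing step
  have fin : ∀ n : ℕ, ∀ S : Finset V, m * (n + 1) ≤ eCross G S Sᶜ * (2 * n + 1) →
      (2 * n + 1 : ℝ) ≤ H → (m : ℝ) / 2 + H / 4 + 1 / 4 ≤ EE G S Sᶜ := by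
    intro n S hS hn
    rw [EE_cross]
    have hS' : (m : ℝ) * (n + 1) ≤ eCross G S Sᶜ * (2 * n + 1) := by exact_mod_cast hS
    have hpos : (0 : ℝ) < 2 * n + 1 := by positivity
    refine le_of_mul_le_mul_right (le_trans ?_ hS') hpos
    nlinarith [mul_nonneg (by linarith : (0:ℝ) ≤ H + 1) (by linarith : (0:ℝ) ≤ H - (2 * n + 1))]
  rcases Nat.even_or_odd' k with ⟨l, hl | hl⟩
  · right
    obtain ⟨n, rfl⟩ : ∃ n, l = n + 1 := ⟨l - 1, by omega⟩
    subst hl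
    obtain ⟨S, hS⟩ := color_cut G n C
    rw [← hm] at hS
    refine ⟨S, fin n S hS ?_⟩
    have e : 2 * (n + 1) - 1 = 2 * n + 1 := by omega
    rw [e] at h1
    have h1' : (2 * ((n : ℝ) + 1)) * (2 * n + 1) ≤ 2 * m := by exact_mod_cast h1
    by_contra hc
    push Not at hc
    nlinarith
  · by_cases heq : 2 * m ≤ k * (k - 1)
    · left
      obtain ⟨a, b⟩ := h2 heq
      exact ⟨a, b ▸ ⟨l, hl⟩⟩
    right
    obtain ⟨C'⟩ := hkc.mono (show k ≤ 2 * (l + 1) by omega)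
    obtain ⟨S, hS⟩ := color_cut G l C'
    rw [← hm] at hS
    refine ⟨S, ?_⟩
    by_cases hHk : (2 * l + 1 : ℝ) ≤ H
    · exact fin l S hS hHk
    push Not at hHk
    subst hl
    have e : 2 * l + 1 - 1 = 2 * l := by omega
    rw [e] at heq
    push Not at heq
    obtain ⟨c, hc⟩ : ∃ c, c = eCross G S Sᶜ := ⟨_, rfl⟩
    rw [EE_cross, ← hc]
    rw [← hc] at hS
    have hmj : ∃ j, m = (2 * l + 1) * l + j ∧ 1 ≤ j := by
      refine ⟨m - (2 * l + 1) * l, ?_, ?_⟩ <;> 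
      · have : (2 * l + 1) * (2 * l) = 2 * ((2 * l + 1) * l) := by ring
        omega
    obtain ⟨j, hj, hj1⟩ := hmj
    have hc2 : 2 * (l * l + l) + j < 2 * c := by
      by_contra hcon
      push Not at hcon
      nlinarith
    have hc3 : m + l + 1 ≤ 2 * c := by
      rw [hj]; nlinarith
    have : (m : ℝ) + l + 1 ≤ 2 * c := by exact_mod_cast hc3
    linarith

end Aux

/-- Stability of judicious 2-partitions: either `G` is a complete graph of odd order,
or `f₂(G) ≥ m/2 + h(m)/4 + 1/4` and there is a 2-partition with
`max{e(V₁),e(V₂)} ≤ m/4 + h(m)/8` and `e(V₁,V₂) ≥ m/2 + h(m)/4 + 1/4`. -/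
theorem stmt_3 {V : Type*} [Fintype V] [DecidableEq V]
    (G : SimpleGraph V) [DecidableRel G.Adj] (m : ℕ) (hm : m = G.edgeFinset.card)
    (hm1 : 1 ≤ m) (hiso : ∀ v : V, ∃ w : V, G.Adj v w) :
    (G = ⊤ ∧ Odd (Fintype.card V)) ∨
    (((m : ℝ) / 2 + (1 / 4) * hfun m + 1 / 4 ≤ (maxCut G 2 : ℝ)) ∧
      ∃ P : Fin 2 → Finset V, IsKPartition P ∧
        (∀ i : Fin 2, (eIn G (P i) : ℝ) ≤ (m : ℝ) / 4 + (1 / 8) * hfun m) ∧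
        (m : ℝ) / 2 + (1 / 4) * hfun m + 1 / 4 ≤ (crossTotal G P : ℝ)) := by
  obtain ⟨H, hHd⟩ : ∃ H, H = hfun m := ⟨_, rfl⟩
  have hm1' : (1 : ℝ) ≤ m := by exact_mod_cast hm1
  have hsq := Real.sq_sqrt (show (0 : ℝ) ≤ 2 * m + 1 / 4 by positivity)
  have hH : H * (H + 1) = 2 * m := by
    rw [hHd]; unfold hfun; nlinarith
  have hH1 : 1 ≤ H := by
    have : (3 / 2 : ℝ) ≤ Real.sqrt (2 * m + 1 / 4) := by
      apply Real.le_sqrt_of_sq_le; linarith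
    rw [hHd]; unfold hfun; linarith
  rcases cut_bound G m hm hm1 hiso H hH1 hH with h | ⟨S, hS⟩
  · exact Or.inl h
  right
  obtain ⟨W, hx, hy, hc⟩ := judicious G m hm H hH1 hH S hS
  rw [← hHd]
  have hpart : IsKPartition ![W, Wᶜ] := by
    constructor
    · intro i j hij
      fin_cases i <;> fin_cases j <;> simp_all [disjoint_compl_right, disjoint_compl_left]
    · intro v
      by_cases hv : v ∈ W
      · exact ⟨0, by simpa using hv⟩
      · exact ⟨1, by simpa using hv⟩
  have hcross : crossTotal G ![W, Wᶜ] = eCross G W Wᶜ := by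
    simp [crossTotal, Fin.sum_univ_two]
  have hfinal : (m : ℝ) / 2 + (1 / 4) * H + 1 / 4 ≤ (crossTotal G ![W, Wᶜ] : ℝ) := by
    rw [hcross, ← EE_cross]; linarith
  refine ⟨hfinal.trans ?_, ![W, Wᶜ], hpart, ?_, hfinal⟩
  · have hb : BddAbove {n : ℕ | ∃ P : Fin 2 → Finset V, IsKPartition P ∧ crossTotal G P = n} := by
      have : {n : ℕ | ∃ P : Fin 2 → Finset V, IsKPartition P ∧ crossTotal G P = n} ⊆
          Set.range (fun P : Fin 2 → Finset V => crossTotal G P) := by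
        rintro n ⟨P, -, rfl⟩; exact ⟨P, rfl⟩
      exact ((Set.finite_range _).subset this).bddAbove
    have := le_csSup hb ⟨![W, Wᶜ], hpart, rfl⟩
    unfold maxCut
    exact_mod_cast this
  · intro i
    fin_cases i
    · have := EE_in G W
      simp only [Fin.zero_eta, Matrix.cons_val_zero]; linarith
    · have := EE_in G Wᶜ
      simp only [Fin.mk_one, Matrix.cons_val_one, Matrix.cons_val_zero]; linarith
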